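/- Let d ≥ 1 be an integer and let β ∈ (0, d). There exists a constant C > 0, depending only on d and β, such that for all t₁, t₂ > 0 and all x₁, x₂ ∈ ℝ^d with x₁ ≠ x₂, ∫_{ℝ^d} ∫_{ℝ^d} p_{t₁}(x₁ − y) p_{t₂}(x₂ − z) ‖y − z‖^{−β} dy dz ≤ C ‖x₁ − x₂‖^{−β}. -/

import Mathlib

open MeasureTheory

noncomputable def heatKernel (d : ℕ) (t : ℝ) (x : EuclideanSpace ℝ (Fin d)) : ℝ :=
  (2 * Real.pi * t) ^ (-(d : ℝ) / 2) * Real.exp (-‖x‖ ^ 2 / (2 * t))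

def box (d : ℕ) (R : ℝ) : Set (EuclideanSpace ℝ (Fin d)) :=
  {x | ∀ i, |x i| ≤ R}

/-!
The mass of a function `f` on an `n`-dimensional space and the supremum of `f x * ‖x‖ ^ n` are both
unchanged when `f` is replaced by `x ↦ s⁻ⁿ f (x / s)`, so for the heat kernels they are bounded
uniformly in time. These two quantities control the Riesz potential of `f ≥ 0` at `v ≠ 0`: where
`‖v - y‖ ≥ ‖v‖ / 2` the Riesz kernel is at most `(‖v‖ / 2) ^ (-β)`, and where `‖v - y‖ < ‖v‖ / 2`
one has `‖y‖ ≥ ‖v‖ / 2`, so that `f y` is at most a multiple of `‖v‖⁻ⁿ`, while the Riesz kernel has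
integral of order `‖v‖ ^ (n - β)` over that ball. The potential is thus bounded by a multiple of
`‖v‖ ^ (-β)`, and applying this once in each variable bounds the double integral.
-/

open Metric Module

section RieszPotential

variable {E : Type*} [NormedAddCommGroup E] [MeasurableSpace E] {μ : Measure E} {β : ℝ}

/-- The Riesz potential of `f` of exponent `β`, that is, the convolution of `f` with the
unnormalised Riesz kernel `‖·‖ ^ (-β)`. -/
noncomputable def rieszPotential (μ : Measure E) (β : ℝ) (f : E → ℝ) (v : E) : ℝ :=
  ∫ y, f y * ‖v - y‖ ^ (-β) ∂μ

/-- The constant in the bound by `‖v‖ ^ (-β)` for the Riesz potential of a function of mass `m` and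
critical decay constant `M`. -/
noncomputable def rieszPotentialConst (μ : Measure E) (β m M : ℝ) : ℝ :=
  2 ^ β * (m + M * ∫ y in ball 0 1, ‖y‖ ^ (-β) ∂μ)

lemma rieszPotential_nonneg {f : E → ℝ} (hf : ∀ x, 0 ≤ f x) (v : E) :
    0 ≤ rieszPotential μ β f v :=
  integral_nonneg fun y => mul_nonneg (hf y) (by positivity)

lemma integral_integral_eq_integral_mul_rieszPotential [MeasurableAdd E] [MeasurableNeg E]
    [μ.IsAddLeftInvariant] [μ.IsNegInvariant] (f g : E → ℝ) (x w : E) :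
    ∫ y, ∫ z, f (x - y) * g (w - z) * ‖y - z‖ ^ (-β) ∂μ ∂μ =
      ∫ y, f y * rieszPotential μ β g (y - (x - w)) ∂μ := by
  have hinner (y : E) : ∫ z, g (w - z) * ‖y - z‖ ^ (-β) ∂μ = rieszPotential μ β g (w - y) := by
    have := integral_sub_left_eq_self (fun z => g z * ‖w - y - z‖ ^ (-β)) μ w
    simpa only [rieszPotential, sub_sub_sub_cancel_left, norm_sub_rev _ y] using this
  have houter := integral_sub_left_eq_self
    (fun y => f y * rieszPotential μ β g (y - (x - w))) μ x
  simpa only [mul_assoc, integral_const_mul, hinner, sub_sub_sub_cancel_left] using houter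

lemma rieszPotentialConst_pos {m M : ℝ} (hm : 0 < m) (hM : 0 ≤ M) :
    0 < rieszPotentialConst μ β m M := by
  have : 0 ≤ ∫ y in ball 0 1, ‖y‖ ^ (-β) ∂μ := integral_nonneg fun y => by positivity
  unfold rieszPotentialConst
  positivity

variable [NormedSpace ℝ E]

/-- Nonnegative integrable functions dominated by `M * ‖x‖ ^ (-n)`, where `n` is the dimension, the
exponent at which the bound is scale invariant. The bound is multiplied out so that it says nothing
about the value at `0`. -/
structure HasCriticalDecay (μ : Measure E) (M : ℝ) (f : E → ℝ) : Prop where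
  nonneg : ∀ x, 0 ≤ f x
  integrable : Integrable f μ
  mul_norm_pow_le : ∀ x, f x * ‖x‖ ^ finrank ℝ E ≤ M

/-- A majorant of `y ↦ f y * ‖v - y‖ ^ (-β)`, the integrand of the Riesz potential at `v`: the first
summand accounts for the `y` outside `ball v (‖v‖ / 2)`, the second for those inside. -/
noncomputable def rieszMajorant (β M : ℝ) (f : E → ℝ) (v y : E) : ℝ :=
  (‖v‖ / 2) ^ (-β) * f y +
    M / (‖v‖ / 2) ^ finrank ℝ E * (ball 0 (‖v‖ / 2)).indicator (fun u => ‖u‖ ^ (-β)) (v - y)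

namespace HasCriticalDecay

variable {M : ℝ} {f : E → ℝ}

lemma const_nonneg (hf : HasCriticalDecay μ M f) : 0 ≤ M :=
  (mul_nonneg (hf.nonneg 0) (by positivity)).trans (hf.mul_norm_pow_le 0)

lemma le_div_pow (hf : HasCriticalDecay μ M f) {ρ : ℝ} (hρ : 0 < ρ) {y : E} (hy : ρ ≤ ‖y‖) :
    f y ≤ M / ρ ^ finrank ℝ E := by
  rw [le_div_iff₀ (by positivity)]
  have := hf.nonneg y
  calc f y * ρ ^ finrank ℝ E ≤ f y * ‖y‖ ^ finrank ℝ E := by gcongr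
    _ ≤ M := hf.mul_norm_pow_le y

lemma mul_norm_sub_rpow_neg_le_rieszMajorant (hf : HasCriticalDecay μ M f) (hβ : 0 ≤ β) {v : E}
    (hv : v ≠ 0) (y : E) : f y * ‖v - y‖ ^ (-β) ≤ rieszMajorant β M f v y := by
  have hρ : 0 < ‖v‖ / 2 := by positivity
  have hfy := hf.nonneg y
  rcases le_or_gt (‖v‖ / 2) ‖v - y‖ with hfar | hnear
  · have hnot : v - y ∉ ball (0 : E) (‖v‖ / 2) := by simpa using hfar
    rw [rieszMajorant, Set.indicator_of_notMem hnot, mul_zero, add_zero, mul_comm]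
    gcongr ?_ * _
    exact Real.rpow_le_rpow_of_nonpos hρ hfar (neg_nonpos.mpr hβ)
  · have hy : ‖v‖ / 2 ≤ ‖y‖ := by linarith [norm_sub_norm_le v y]
    have hfle := hf.le_div_pow hρ hy
    rw [rieszMajorant, Set.indicator_of_mem (by simpa using hnear)]
    exact le_add_of_nonneg_of_le (by positivity) (by gcongr)

end HasCriticalDecay

variable [FiniteDimensional ℝ E] [BorelSpace E] [μ.IsAddHaarMeasure]

lemma integrableOn_ball_norm_rpow_neg (hβ : 0 ≤ β) (hβn : β < finrank ℝ E) (ρ : ℝ) :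
    IntegrableOn (fun y : E => ‖y‖ ^ (-β)) (ball 0 ρ) μ := by
  have hn : 0 < finrank ℝ E := by exact_mod_cast hβ.trans_lt hβn
  refine integrableOn_ball_of_norm_le_rpow (C := 1) hn hβn (.of_forall fun y => ?_)
    (by fun_prop : Measurable fun y : E => ‖y‖ ^ (-β)).aestronglyMeasurable
  rw [one_mul, Real.norm_of_nonneg (by positivity)]

lemma setIntegral_ball_norm_rpow_neg {ρ : ℝ} (hρ : 0 < ρ) :
    ∫ y in ball 0 ρ, ‖y‖ ^ (-β) ∂μ =
      ρ ^ finrank ℝ E * ρ ^ (-β) * ∫ y in ball 0 1, ‖y‖ ^ (-β) ∂μ := by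
  have hscale := Measure.setIntegral_comp_smul_of_pos μ (fun y => ‖y‖ ^ (-β)) (ball 0 1) hρ
  simp only [norm_smul, Real.norm_of_nonneg hρ.le, Real.mul_rpow hρ.le (norm_nonneg _),
    integral_const_mul, smul_unitBall_of_pos hρ, smul_eq_mul] at hscale
  rw [mul_assoc, hscale, mul_inv_cancel_left₀ (by positivity)]

lemma integrable_indicator_ball_norm_rpow_neg_sub (hβ : 0 ≤ β) (hβn : β < finrank ℝ E) (ρ : ℝ)
    (v : E) : Integrable (fun y => (ball 0 ρ).indicator (fun u => ‖u‖ ^ (-β)) (v - y)) μ :=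
  ((integrableOn_ball_norm_rpow_neg hβ hβn ρ).integrable_indicator
    measurableSet_ball).comp_sub_left v

lemma integrable_rieszMajorant (hβ : 0 ≤ β) (hβn : β < finrank ℝ E) {f : E → ℝ}
    (hf : Integrable f μ) (M : ℝ) (v : E) : Integrable (rieszMajorant β M f v) μ :=
  (hf.const_mul _).add ((integrable_indicator_ball_norm_rpow_neg_sub hβ hβn _ v).const_mul _)

lemma integral_rieszMajorant (hβ : 0 ≤ β) (hβn : β < finrank ℝ E) {f : E → ℝ}
    (hf : Integrable f μ) (M : ℝ) {v : E} (hv : v ≠ 0) :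
    ∫ y, rieszMajorant β M f v y ∂μ =
      rieszPotentialConst μ β (∫ y, f y ∂μ) M * ‖v‖ ^ (-β) := by
  have hρ : 0 < ‖v‖ / 2 := by positivity
  calc ∫ y, rieszMajorant β M f v y ∂μ
    _ = (‖v‖ / 2) ^ (-β) * ∫ y, f y ∂μ +
          M / (‖v‖ / 2) ^ finrank ℝ E * ∫ y in ball 0 (‖v‖ / 2), ‖y‖ ^ (-β) ∂μ := by
        simp only [rieszMajorant]
        rw [integral_add (hf.const_mul _)
            ((integrable_indicator_ball_norm_rpow_neg_sub hβ hβn _ v).const_mul _),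
          integral_const_mul, integral_const_mul,
          integral_sub_left_eq_self ((ball 0 (‖v‖ / 2)).indicator fun u => ‖u‖ ^ (-β)),
          integral_indicator measurableSet_ball]
    _ = (‖v‖ / 2) ^ (-β) * (∫ y, f y ∂μ + M * ∫ y in ball 0 1, ‖y‖ ^ (-β) ∂μ) := by
        rw [setIntegral_ball_norm_rpow_neg hρ]
        field_simp
    _ = rieszPotentialConst μ β (∫ y, f y ∂μ) M * ‖v‖ ^ (-β) := by
        rw [rieszPotentialConst, Real.div_rpow (norm_nonneg v) zero_le_two,
          Real.rpow_neg zero_le_two]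
        field_simp

namespace HasCriticalDecay

variable {M : ℝ} {f : E → ℝ}

lemma integrable_mul_norm_sub_rpow_neg (hf : HasCriticalDecay μ M f) (hβ : 0 ≤ β)
    (hβn : β < finrank ℝ E) {v : E} (hv : v ≠ 0) :
    Integrable (fun y => f y * ‖v - y‖ ^ (-β)) μ := by
  refine (integrable_rieszMajorant hβ hβn hf.integrable M v).mono' ?_ (.of_forall fun y => ?_)
  · exact hf.integrable.aestronglyMeasurable.mul
      (by fun_prop : Measurable fun y : E => ‖v - y‖ ^ (-β)).aestronglyMeasurable
  · rw [Real.norm_of_nonneg (mul_nonneg (hf.nonneg y) (by positivity))]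
    exact hf.mul_norm_sub_rpow_neg_le_rieszMajorant hβ hv y

theorem rieszPotential_le (hf : HasCriticalDecay μ M f) (hβ : 0 ≤ β) (hβn : β < finrank ℝ E)
    {v : E} (hv : v ≠ 0) :
    rieszPotential μ β f v ≤ rieszPotentialConst μ β (∫ y, f y ∂μ) M * ‖v‖ ^ (-β) :=
  calc rieszPotential μ β f v
    _ ≤ ∫ y, rieszMajorant β M f v y ∂μ :=
        integral_mono (hf.integrable_mul_norm_sub_rpow_neg hβ hβn hv)
          (integrable_rieszMajorant hβ hβn hf.integrable M v)
          (hf.mul_norm_sub_rpow_neg_le_rieszMajorant hβ hv)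
    _ = _ := integral_rieszMajorant hβ hβn hf.integrable M hv

theorem integral_integral_mul_norm_sub_rpow_neg_le (hf : HasCriticalDecay μ M f) {N : ℝ}
    {g : E → ℝ} (hg : HasCriticalDecay μ N g) (hβ : 0 ≤ β) (hβn : β < finrank ℝ E) {x w : E}
    (hxw : x ≠ w) :
    ∫ y, ∫ z, f (x - y) * g (w - z) * ‖y - z‖ ^ (-β) ∂μ ∂μ ≤
      rieszPotentialConst μ β (∫ y, g y ∂μ) N * rieszPotentialConst μ β (∫ y, f y ∂μ) M *
        ‖x - w‖ ^ (-β) := by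
  set K := rieszPotentialConst μ β (∫ y, g y ∂μ) N
  have hv : x - w ≠ 0 := sub_ne_zero.mpr hxw
  have hK : 0 ≤ K :=
    nonneg_of_mul_nonneg_left
      ((rieszPotential_nonneg hg.nonneg _).trans (hg.rieszPotential_le hβ hβn hv)) (by positivity)
  have : Nontrivial E := ⟨x, w, hxw⟩
  calc ∫ y, ∫ z, f (x - y) * g (w - z) * ‖y - z‖ ^ (-β) ∂μ ∂μ
    _ = ∫ y, f y * rieszPotential μ β g (y - (x - w)) ∂μ :=
        integral_integral_eq_integral_mul_rieszPotential f g x w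
    _ ≤ ∫ y, K * (f y * ‖x - w - y‖ ^ (-β)) ∂μ := by
        refine integral_mono_of_nonneg
          (.of_forall fun y => mul_nonneg (hf.nonneg y) (rieszPotential_nonneg hg.nonneg _))
          ((hf.integrable_mul_norm_sub_rpow_neg hβ hβn hv).const_mul K) ?_
        filter_upwards [μ.ae_ne (x - w)] with y hy
        have hgy := hg.rieszPotential_le hβ hβn (sub_ne_zero.mpr hy)
        rw [norm_sub_rev] at hgy
        exact (mul_le_mul_of_nonneg_left hgy (hf.nonneg y)).trans_eq (mul_left_comm _ _ _)
    _ = K * rieszPotential μ β f (x - w) := integral_const_mul _ _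
    _ ≤ K * (rieszPotentialConst μ β (∫ y, f y ∂μ) M * ‖x - w‖ ^ (-β)) := by
        gcongr
        exact hf.rieszPotential_le hβ hβn hv
    _ = _ := (mul_assoc _ _ _).symm

end HasCriticalDecay

end RieszPotential

section HeatKernel

lemma rpow_mul_exp_neg_le {a s : ℝ} (ha : 0 ≤ a) (hs : 0 ≤ s) :
    s ^ a * Real.exp (-s) ≤ (a * Real.exp (-1)) ^ a := by
  rcases ha.eq_or_lt with rfl | ha
  · simpa using hs
  calc s ^ a * Real.exp (-s) = (a * (s / a * Real.exp (-(s / a)))) ^ a := by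
        rw [← mul_assoc, mul_div_cancel₀ _ ha.ne', Real.mul_rpow hs (Real.exp_pos _).le,
          ← Real.exp_mul, neg_mul, div_mul_cancel₀ _ ha.ne']
    _ ≤ (a * Real.exp (-1)) ^ a := by
        gcongr
        exact Real.mul_exp_neg_le_exp_neg_one (s / a)

variable {d : ℕ} {t : ℝ}

lemma heatKernel_nonneg (ht : 0 ≤ t) (x : EuclideanSpace ℝ (Fin d)) : 0 ≤ heatKernel d t x := by
  unfold heatKernel
  positivity

lemma integral_heatKernel (ht : 0 < t) : ∫ x, heatKernel d t x = 1 := by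
  have hexp (x : EuclideanSpace ℝ (Fin d)) :
      -‖x‖ ^ 2 / (2 * t) = -(1 / (2 * t)) * ‖x‖ ^ 2 := by ring
  have hgauss := GaussianFourier.integral_rexp_neg_mul_sq_norm (V := EuclideanSpace ℝ (Fin d))
    (b := 1 / (2 * t)) (by positivity)
  rw [finrank_euclideanSpace_fin, show Real.pi / (1 / (2 * t)) = 2 * Real.pi * t by field_simp]
    at hgauss
  calc ∫ x, heatKernel d t x
    _ = (2 * Real.pi * t) ^ (-(d : ℝ) / 2) *
          ∫ x : EuclideanSpace ℝ (Fin d), Real.exp (-(1 / (2 * t)) * ‖x‖ ^ 2) := by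
        simp only [heatKernel, hexp, integral_const_mul]
    _ = 1 := by
        rw [hgauss, neg_div, Real.rpow_neg (by positivity), inv_mul_cancel₀ (by positivity)]

lemma integrable_heatKernel (ht : 0 < t) : Integrable (heatKernel d t) :=
  .of_integral_ne_zero (by simp [integral_heatKernel ht])

lemma heatKernel_mul_norm_pow (ht : 0 < t) (x : EuclideanSpace ℝ (Fin d)) :
    heatKernel d t x * ‖x‖ ^ d =
      Real.pi ^ (-(d : ℝ) / 2) *
        ((‖x‖ ^ 2 / (2 * t)) ^ ((d : ℝ) / 2) * Real.exp (-(‖x‖ ^ 2 / (2 * t)))) := by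
  have hpow : ‖x‖ ^ d = (‖x‖ ^ 2) ^ ((d : ℝ) / 2) := by
    rw [← Real.rpow_natCast, ← Real.rpow_natCast, ← Real.rpow_mul (norm_nonneg x)]
    congr 1
    push_cast
    ring
  rw [heatKernel, hpow, Real.div_rpow (by positivity) (by positivity),
    show 2 * Real.pi * t = Real.pi * (2 * t) by ring,
    Real.mul_rpow Real.pi_pos.le (by positivity), neg_div,
    Real.rpow_neg (x := 2 * t) (by positivity), neg_div]
  ring

theorem hasCriticalDecay_heatKernel (ht : 0 < t) :
    HasCriticalDecay volume
      (Real.pi ^ (-(d : ℝ) / 2) * ((d : ℝ) / 2 * Real.exp (-1)) ^ ((d : ℝ) / 2))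
      (heatKernel d t) where
  nonneg := heatKernel_nonneg ht.le
  integrable := integrable_heatKernel ht
  mul_norm_pow_le x := by
    rw [finrank_euclideanSpace_fin, heatKernel_mul_norm_pow ht]
    gcongr
    exact rpow_mul_exp_neg_le (by positivity) (by positivity)

end HeatKernel

theorem stmt_4 (d : ℕ) (hd : 1 ≤ d) (β : ℝ) (hβ0 : 0 < β) (hβd : β < d) :
    ∃ C : ℝ, 0 < C ∧ ∀ t₁ t₂ : ℝ, 0 < t₁ → 0 < t₂ →
      ∀ x₁ x₂ : EuclideanSpace ℝ (Fin d), x₁ ≠ x₂ →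
      (∫ y : EuclideanSpace ℝ (Fin d), ∫ z : EuclideanSpace ℝ (Fin d),
          heatKernel d t₁ (x₁ - y) * heatKernel d t₂ (x₂ - z) * ‖y - z‖ ^ (-β)) ≤
        C * ‖x₁ - x₂‖ ^ (-β) := by
  have hβn : β < finrank ℝ (EuclideanSpace ℝ (Fin d)) := by rwa [finrank_euclideanSpace_fin]
  have hK := rieszPotentialConst_pos (μ := (volume : Measure (EuclideanSpace ℝ (Fin d)))) (β := β)
    one_pos (hasCriticalDecay_heatKernel (d := d) one_pos).const_nonneg
  refine ⟨_, mul_pos hK hK, fun t₁ t₂ ht₁ ht₂ x₁ x₂ hx => ?_⟩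
  have hbound := (hasCriticalDecay_heatKernel ht₁).integral_integral_mul_norm_sub_rpow_neg_le
    (hasCriticalDecay_heatKernel ht₂) hβ0.le hβn hx
  rwa [integral_heatKernel ht₁, integral_heatKernel ht₂] at hbound
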